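/- Pruning step for nonnegative quadrature rules: Let D be a set, V a finite-dimensional real vector space of real-valued functions on D, and L : V → ℝ a linear functional. Suppose points x_1,…,x_M ∈ D and nonnegative weights w_1,…,w_M ≥ 0 satisfy Σ_i w_i f(x_i) = L(f) for all f ∈ V, and suppose the number of indices i with w_i > 0 is strictly greater than dim V. Then there exist nonnegative weights w'_1,…,w'_M ≥ 0 with Σ_i w'_i f(x_i) = L(f) for all f ∈ V, such that the support {i : w'_i > 0} is a proper subset of {i : w_i > 0}. -/

import Mathlib

/-- More points than the dimension of a function space `V` carry a nonzero weight vector, with a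
positive entry, that annihilates `V`. -/
theorem exists_null_weights_of_finrank_lt_card {D ι : Type*} [Fintype ι]
    (V : Submodule ℝ (D → ℝ)) [FiniteDimensional ℝ V] (x : ι → D) (s : Finset ι)
    (hs : Module.finrank ℝ V < s.card) :
    ∃ d : ι → ℝ, (∀ i ∉ s, d i = 0) ∧ (∀ f : V, ∑ i, d i * (f : D → ℝ) (x i) = 0) ∧
      ∃ i, 0 < d i := by
  classical
  let ev : s → Module.Dual ℝ V := fun i => LinearMap.proj (x i) ∘ₗ V.subtype
  have hdep : ¬ LinearIndependent ℝ ev := fun h => by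
    have := h.fintype_card_le_finrank
    rw [Subspace.dual_finrank_eq, Fintype.card_coe] at this
    omega
  obtain ⟨g, hg, ⟨j, hjs⟩, hj⟩ := Fintype.not_linearIndependent_iff.mp hdep
  let d : ι → ℝ := fun i => if h : i ∈ s then g ⟨i, h⟩ else 0
  have hd_off : ∀ i ∉ s, d i = 0 := fun i hi => dif_neg hi
  have hd_null : ∀ f : V, ∑ i, d i * (f : D → ℝ) (x i) = 0 := fun f => by
    rw [← Finset.sum_subset s.subset_univ fun i _ hi => by rw [hd_off i hi, zero_mul],
      ← Finset.sum_coe_sort s]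
    simpa [ev, d] using LinearMap.congr_fun hg f
  have hdj : d j ≠ 0 := by simpa [d, hjs] using hj
  rcases hdj.lt_or_gt with hneg | hpos
  · exact ⟨-d, fun i hi => by simp [hd_off i hi], fun f => by simp [hd_null f],
      j, by simpa using hneg⟩
  · exact ⟨d, hd_off, hd_null, j, hpos⟩

/-- Pruning step for nonnegative quadrature rules: if an exact nonnegative-weight
quadrature rule has more than `dim V` strictly positive weights, then there is an
exact nonnegative-weight rule on the same points whose support is a proper subset
of the original support. -/
theorem quadrature_pruning_step {D : Type*} (V : Submodule ℝ (D → ℝ))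
    [FiniteDimensional ℝ V] (L : V →ₗ[ℝ] ℝ) (M : ℕ) (x : Fin M → D)
    (w : Fin M → ℝ) (hw : ∀ i, 0 ≤ w i)
    (hexact : ∀ f : V, ∑ i, w i * (f : D → ℝ) (x i) = L f)
    (hcard : Module.finrank ℝ V < (Finset.univ.filter fun i => 0 < w i).card) :
    ∃ w' : Fin M → ℝ, (∀ i, 0 ≤ w' i) ∧
      (∀ f : V, ∑ i, w' i * (f : D → ℝ) (x i) = L f) ∧
      (Finset.univ.filter fun i => 0 < w' i) ⊂ (Finset.univ.filter fun i => 0 < w i) := by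
  obtain ⟨d, hd_off, hd_null, j, hj⟩ :=
    exists_null_weights_of_finrank_lt_card V x _ hcard
  obtain ⟨k, hk, hmin⟩ := (Finset.univ.filter fun i => 0 < d i).exists_min_image
    (fun i => w i / d i) ⟨j, by simpa using hj⟩
  simp only [Finset.mem_filter, Finset.mem_univ, true_and] at hk hmin hd_off
  have hoff : ∀ i, ¬ 0 < w i → w i - w k / d k * d i = 0 := fun i hi => by
    rw [hd_off i hi, mul_zero, sub_zero]
    exact le_antisymm (not_lt.mp hi) (hw i)
  refine ⟨fun i => w i - w k / d k * d i, fun i => sub_nonneg.mpr ?_, fun f => ?_, ?_⟩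
  · rcases lt_or_ge 0 (d i) with hi | hi
    · exact (le_div_iff₀ hi).mp (hmin i hi)
    · exact (mul_nonpos_of_nonneg_of_nonpos (div_nonneg (hw k) hk.le) hi).trans (hw i)
  · simp only [sub_mul, mul_assoc, Finset.sum_sub_distrib, ← Finset.mul_sum]
    rw [hd_null, mul_zero, sub_zero, hexact]
  · refine Finset.ssubset_iff_subset_ne.mpr ⟨fun i hi => ?_, fun heq => ?_⟩
    · simp only [Finset.mem_filter, Finset.mem_univ, true_and] at hi ⊢
      by_contra hwi
      exact hi.ne' (hoff i hwi)
    · have hwk : 0 < w k := by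
        by_contra hwk
        exact hk.ne' (hd_off k hwk)
      have hmem := Finset.ext_iff.mp heq k
      simp [hwk, div_mul_cancel₀ _ hk.ne'] at hmem
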